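/- (Corollary 1.1) Under the assumptions of Theorem 1.1, there exists c₆ > 0 such that for all N ≥ 2 there exists an N-point set D_N ⊂ M with L_∞[D_N] = sup_{y ∈ M, r ∈ [0,1]} |#(B(y,r) ∩ D_N) − N μ(B(y,r))| ≤ c₆ N^{1/2 − 1/(2d)} (log N)^{1/2}. -/

import Mathlib

open MeasureTheory Metric Set

/-- The volume of the metric ball, with the convention `v(y,r) = 1` for `r ≥ 1`. -/
noncomputable def vol {M : Type*} [MetricSpace M] [MeasurableSpace M]
    (μ : MeasureTheory.Measure M) (y : M) (r : ℝ) : ℝ :=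
  if 1 ≤ r then 1 else (μ (Metric.ball y r)).toReal

/-!
Choose one random point in each part of a partition into `N` parts of equal measure (jittered
sampling). A part which a ball does not cut contributes a constant to the discrepancy of that ball,
and by the Lipschitz condition only `O(N ^ (1 - 1/d))` parts meet the boundary of a given ball, so
the discrepancy is sub-Gaussian with variance proxy `O(N ^ (1 - 1/d))`. A union bound over
`N ^ O(1)` balls, with centres in an `O(1/N)`-net and radii close to multiples of `1/N`, gives the
rate for these balls, and every ball is bracketed between two of them at a cost of `O(1/N)` in
measure, that is of `O(1)` in discrepancy.

The bounded terms are absorbed because the rate is bounded below: a part of measure `1/m` lies in a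
ball of radius `O(m ^ (-1/d))`, hence of measure `O(m ^ (-1/d))`, which forces `1 ≤ d`.
-/

open ProbabilityTheory Filter
open scoped NNReal Topology

section Elementary

lemma four_mul_succ_mul_pow_mul_exp_lt_one {N : ℕ} (hN : 2 ≤ N) (q : ℕ) :
    4 * ((N : ℝ) + 1) * N ^ q * Real.exp (-((q + 4) * Real.log N)) < 1 := by
  have hN₀ : (0 : ℝ) < N := by positivity
  have hexp : Real.exp (-((q + 4) * Real.log N)) = ((N : ℝ) ^ (q + 4))⁻¹ := by
    rw [Real.exp_neg, mul_comm, ← Real.rpow_def_of_pos hN₀]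
    norm_cast
  have hpoly : 4 * (N + 1) < N ^ 4 := by nlinarith [Nat.pow_le_pow_left hN 3]
  have hpoly_real : 4 * ((N : ℝ) + 1) < N ^ 4 := by exact_mod_cast hpoly
  rw [hexp, ← div_eq_mul_inv, div_lt_one (by positivity), pow_add, mul_comm]
  gcongr

lemma exists_fin_div_le_and_le_div {n : ℕ} (hn : n ≠ 0) {r : ℝ} (hr : r ∈ Icc (0 : ℝ) 1) :
    ∃ m : Fin (n + 1), (m : ℝ) / n ≤ r ∧ r ≤ (m + 1) / n := by
  have hn₀ : (0 : ℝ) < n := by positivity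
  have hfloor : (⌊r * n⌋₊ : ℝ) ≤ r * n := Nat.floor_le (mul_nonneg hr.1 hn₀.le)
  have hlt : ⌊r * n⌋₊ < n + 1 :=
    Nat.lt_succ_of_le (Nat.floor_le_of_le (mul_le_of_le_one_left hn₀.le hr.2))
  exact ⟨⟨_, hlt⟩, (div_le_iff₀ hn₀).mpr hfloor,
    (le_div_iff₀ hn₀).mpr (Nat.lt_floor_add_one _).le⟩

end Elementary

section SubGaussian

variable {Ω : Type*} [MeasurableSpace Ω] {ν : Measure Ω}

lemma hasSubgaussianMGF_mono {X : Ω → ℝ} {c c' : ℝ≥0} (h : HasSubgaussianMGF X c ν)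
    (hc : c ≤ c') : HasSubgaussianMGF X c' ν where
  integrable_exp_mul := h.integrable_exp_mul
  mgf_le t := (h.mgf_le t).trans <| by gcongr

lemma measureReal_abs_ge_le_of_hasSubgaussianMGF {X : Ω → ℝ} {c : ℝ≥0}
    (h : HasSubgaussianMGF X c ν) {t : ℝ} (ht : 0 ≤ t) :
    ν.real {ω | t ≤ |X ω|} ≤ 2 * Real.exp (-t ^ 2 / (2 * c)) := by
  have hsplit : {ω | t ≤ |X ω|} = {ω | t ≤ X ω} ∪ {ω | t ≤ (-X) ω} := by
    ext ω
    simp only [mem_ofPred_eq, mem_union, Pi.neg_apply, le_abs]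
  calc ν.real {ω | t ≤ |X ω|}
      ≤ ν.real {ω | t ≤ X ω} + ν.real {ω | t ≤ (-X) ω} := hsplit ▸ measureReal_union_le _ _
    _ ≤ 2 * Real.exp (-t ^ 2 / (2 * c)) := by
      linarith [h.measure_ge_le ht, h.neg.measure_ge_le ht]

lemma exists_forall_abs_le_of_hasSubgaussianMGF [IsProbabilityMeasure ν] {G : Type*} [Fintype G]
    {X : G → Ω → ℝ} {c : ℝ≥0} (h : ∀ g, HasSubgaussianMGF (X g) c ν) {t : ℝ} (ht : 0 ≤ t)
    (hlt : Fintype.card G * (2 * Real.exp (-t ^ 2 / (2 * c))) < 1) :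
    ∃ ω, ∀ g, |X g ω| ≤ t := by
  by_contra! hbad
  have hcover : (⋃ g, {ω | t ≤ |X g ω|}) = univ :=
    eq_univ_of_forall fun ω ↦ mem_iUnion.mpr ((hbad ω).imp fun _ hg ↦ hg.le)
  refine hlt.not_ge ?_
  calc 1 = ν.real (⋃ g, {ω | t ≤ |X g ω|}) := by rw [hcover, probReal_univ]
    _ ≤ ∑ g, ν.real {ω | t ≤ |X g ω|} := measureReal_iUnion_fintype_le _
    _ ≤ ∑ _g : G, 2 * Real.exp (-t ^ 2 / (2 * c)) :=
      Finset.sum_le_sum fun g _ ↦ measureReal_abs_ge_le_of_hasSubgaussianMGF (h g) ht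
    _ = Fintype.card G * (2 * Real.exp (-t ^ 2 / (2 * c))) := by simp

lemma hasSubgaussianMGF_indicator_sub_measureReal [IsProbabilityMeasure ν] {A : Set Ω}
    (hA : MeasurableSet A) :
    HasSubgaussianMGF (fun ω ↦ A.indicator 1 ω - ν.real A) (1 / 4) ν := by
  have h := hasSubgaussianMGF_of_mem_Icc (μ := ν) (X := A.indicator 1) (a := 0) (b := 1)
    (measurable_one.indicator hA).aemeasurable
    (ae_of_all _ fun ω ↦ by by_cases hω : ω ∈ A <;> simp [hω])
  rw [integral_indicator_one hA] at h
  exact hasSubgaussianMGF_mono h (by rw [sub_zero, nnnorm_one]; norm_num)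

lemma hasSubgaussianMGF_indicator_sub_measureReal_zero [IsProbabilityMeasure ν] {A : Set Ω}
    (hA : (∀ᵐ ω ∂ν, ω ∈ A) ∨ ∀ᵐ ω ∂ν, ω ∉ A) :
    HasSubgaussianMGF (fun ω ↦ A.indicator 1 ω - ν.real A) 0 ν := by
  refine HasSubgaussianMGF.fun_zero.congr ?_
  rcases hA with hin | hout
  · have hone : ν.real A = 1 := by
      rw [measureReal_congr (s := A) (t := univ) (eventuallyEq_univ.mpr hin), probReal_univ]
    filter_upwards [hin] with ω hω
    simp [hω, hone]
  · have hzero : ν.real A = 0 := by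
      rw [measureReal_congr (s := A) (t := ∅) (eventuallyEq_empty.mpr hout), measureReal_empty]
    filter_upwards [hout] with ω hω
    simp [hω, hzero]

end SubGaussian

section Discrepancy

variable {M ι : Type*} [Fintype ι]

lemma sum_indicator_one_mono (D : ι → M) {A B : Set M} (h : A ⊆ B) :
    ∑ i, A.indicator (1 : M → ℝ) (D i) ≤ ∑ i, B.indicator 1 (D i) :=
  Finset.sum_le_sum fun _ _ ↦ indicator_le_indicator_of_subset h (fun _ ↦ zero_le_one) _

variable [MeasurableSpace M]

/-- The signed local discrepancy of the points `D i` in the set `A`: the number of points lying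
in `A`, counted with multiplicity, minus its expected value `|ι| μ(A)`. -/
noncomputable def discrepancy (μ : Measure M) (D : ι → M) (A : Set M) : ℝ :=
  ∑ i, A.indicator 1 (D i) - Fintype.card ι * μ.real A

lemma abs_discrepancy_le_card (μ : Measure M) [IsProbabilityMeasure μ] (D : ι → M) (A : Set M) :
    |discrepancy μ D A| ≤ Fintype.card ι := by
  have hcount_nonneg : 0 ≤ ∑ i, A.indicator (1 : M → ℝ) (D i) := by
    simpa using sum_indicator_one_mono D (empty_subset A)
  have hcount_le : ∑ i, A.indicator (1 : M → ℝ) (D i) ≤ Fintype.card ι := by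
    simpa using sum_indicator_one_mono D (subset_univ A)
  have hmean_le : Fintype.card ι * μ.real A ≤ Fintype.card ι :=
    mul_le_of_le_one_right (Nat.cast_nonneg _) measureReal_le_one
  have hmean_nonneg : 0 ≤ Fintype.card ι * μ.real A := by positivity
  exact abs_sub_le_of_nonneg_of_le hcount_nonneg hcount_le hmean_nonneg hmean_le

lemma abs_discrepancy_le_of_subset_of_subset {μ : Measure M} [IsFiniteMeasure μ] {D : ι → M}
    {A B C : Set M} (hAB : A ⊆ B) (hBC : B ⊆ C) {t η : ℝ} (hA : |discrepancy μ D A| ≤ t)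
    (hC : |discrepancy μ D C| ≤ t) (hη : μ.real C - μ.real A ≤ η) :
    |discrepancy μ D B| ≤ t + Fintype.card ι * η := by
  have hcountAB := sum_indicator_one_mono D hAB
  have hcountBC := sum_indicator_one_mono D hBC
  have hmeanAB : Fintype.card ι * μ.real B - Fintype.card ι * μ.real A ≤ Fintype.card ι * η := by
    rw [← mul_sub]
    gcongr
    linarith [measureReal_mono (μ := μ) hBC]
  have hmeanBC : Fintype.card ι * μ.real C - Fintype.card ι * μ.real B ≤ Fintype.card ι * η := by
    rw [← mul_sub]
    gcongr
    linarith [measureReal_mono (μ := μ) hAB]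
  simp only [discrepancy, abs_le] at hA hC ⊢
  constructor <;> linarith

end Discrepancy

section JitteredSampling

variable {M ι : Type*} [MeasurableSpace M] [Fintype ι]

/-- The sets `P j` form a measurable partition of the space into parts of equal measure
`1 / |ι|`. -/
structure IsEquipartition (μ : Measure M) (P : ι → Set M) : Prop where
  measurableSet : ∀ j, MeasurableSet (P j)
  pairwise_disjoint : Pairwise (Function.onFun Disjoint P)
  iUnion_eq_univ : ⋃ j, P j = univ
  measure_eq : ∀ j, μ (P j) = 1 / Fintype.card ι

open Classical in
/-- The parts which the set `A` cuts into two, i.e. those which meet both `A` and its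
complement. -/
noncomputable def cutParts (P : ι → Set M) (A : Set M) : Finset ι :=
  {j | (P j ∩ A).Nonempty ∧ ¬P j ⊆ A}

/-- The law of jittered sampling: one point is chosen in each part `P j`, independently and with
distribution `μ` conditioned on `P j`. -/
noncomputable def jitteredSampling (μ : Measure M) (P : ι → Set M) : Measure (ι → M) :=
  Measure.pi fun j ↦ μ[|P j]

namespace IsEquipartition

variable {μ : Measure M} {P : ι → Set M}

lemma measure_ne_zero (hP : IsEquipartition μ P) (j : ι) : μ (P j) ≠ 0 := by
  simp [hP.measure_eq]

lemma nonempty_index [NeZero μ] (hP : IsEquipartition μ P) : Nonempty ι := by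
  by_contra hempty
  rw [not_nonempty_iff] at hempty
  exact NeZero.ne (μ univ) (by simp [← hP.iUnion_eq_univ])

lemma isProbabilityMeasure_cond [IsFiniteMeasure μ] (hP : IsEquipartition μ P) (j : ι) :
    IsProbabilityMeasure μ[|P j] :=
  cond_isProbabilityMeasure (hP.measure_ne_zero j)

lemma isProbabilityMeasure_jitteredSampling [IsFiniteMeasure μ] (hP : IsEquipartition μ P) :
    IsProbabilityMeasure (jitteredSampling μ P) := by
  have := hP.isProbabilityMeasure_cond
  unfold jitteredSampling
  infer_instance

lemma measureReal_biUnion [IsFiniteMeasure μ] (hP : IsEquipartition μ P) (J : Finset ι) :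
    μ.real (⋃ j ∈ J, P j) = J.card / Fintype.card ι := by
  rw [measureReal_biUnion_finset (fun i _ j _ hij ↦ hP.pairwise_disjoint hij)
    (fun j _ ↦ hP.measurableSet j)]
  simp [measureReal_def, hP.measure_eq, div_eq_mul_inv]

lemma card_le_card_mul_measureReal [IsProbabilityMeasure μ] (hP : IsEquipartition μ P)
    {J : Finset ι} {S : Set M} (hS : ⋃ j ∈ J, P j ⊆ S) :
    (J.card : ℝ) ≤ Fintype.card ι * μ.real S := by
  have := hP.nonempty_index
  calc (J.card : ℝ) = Fintype.card ι * μ.real (⋃ j ∈ J, P j) := by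
        rw [hP.measureReal_biUnion, mul_div_cancel₀ _ (Nat.cast_ne_zero.mpr Fintype.card_ne_zero)]
    _ ≤ Fintype.card ι * μ.real S :=
      mul_le_mul_of_nonneg_left (measureReal_mono hS) (Nat.cast_nonneg _)

lemma sum_cond_measureReal [IsFiniteMeasure μ] (hP : IsEquipartition μ P) {A : Set M}
    (hA : MeasurableSet A) : ∑ j, (μ[|P j]).real A = Fintype.card ι * μ.real A := by
  have hcond (j : ι) : (μ[|P j]).real A = Fintype.card ι * μ.real (P j ∩ A) := by
    simp [measureReal_def, cond_apply (hP.measurableSet j), hP.measure_eq]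
  simp only [hcond]
  rw [← Finset.mul_sum, ← measureReal_iUnion_fintype
    (fun i j hij ↦ (hP.pairwise_disjoint hij).mono inter_subset_left inter_subset_left)
    (fun j ↦ (hP.measurableSet j).inter hA), ← iUnion_inter, hP.iUnion_eq_univ, univ_inter]

lemma discrepancy_eq_sum [IsFiniteMeasure μ] (hP : IsEquipartition μ P) {A : Set M}
    (hA : MeasurableSet A) (ω : ι → M) :
    discrepancy μ ω A = ∑ j, (A.indicator 1 (ω j) - (μ[|P j]).real A) := by
  rw [Finset.sum_sub_distrib, hP.sum_cond_measureReal hA, discrepancy]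

lemma hasSubgaussianMGF_indicator_eval [IsFiniteMeasure μ] (hP : IsEquipartition μ P)
    {A : Set M} (hA : MeasurableSet A) (j : ι) :
    HasSubgaussianMGF (fun ω : ι → M ↦ A.indicator 1 (ω j) - (μ[|P j]).real A)
      ((cutParts P A : Set ι).indicator (fun _ ↦ 1 / 4) j) (jitteredSampling μ P) := by
  have := hP.isProbabilityMeasure_cond
  have heval : MeasurePreserving (Function.eval j) (jitteredSampling μ P) μ[|P j] :=
    measurePreserving_eval _ j
  refine .of_map (X := fun x ↦ A.indicator 1 x - (μ[|P j]).real A) heval.aemeasurable ?_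
  rw [heval.map_eq]
  by_cases hj : j ∈ cutParts P A
  · simpa [hj] using hasSubgaussianMGF_indicator_sub_measureReal hA
  · have huncut : P j ⊆ A ∨ Disjoint (P j) A := by
      simp only [cutParts, Finset.mem_filter_univ, not_and_or, not_not] at hj
      exact hj.symm.imp_right fun h ↦
        disjoint_iff_inter_eq_empty.mpr (not_nonempty_iff_eq_empty.mp h)
    have hmem : ∀ᵐ x ∂μ[|P j], x ∈ P j := ae_cond_mem (hP.measurableSet j)
    simpa [hj] using hasSubgaussianMGF_indicator_sub_measureReal_zero
      (huncut.imp (fun h ↦ hmem.mono fun _ hx ↦ h hx)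
        (fun h ↦ hmem.mono fun _ hx ↦ h.notMem_of_mem_left hx))

lemma hasSubgaussianMGF_discrepancy [IsFiniteMeasure μ] (hP : IsEquipartition μ P) {A : Set M}
    (hA : MeasurableSet A) :
    HasSubgaussianMGF (fun ω ↦ discrepancy μ ω A) ((cutParts P A).card / 4)
      (jitteredSampling μ P) := by
  have := hP.isProbabilityMeasure_cond
  have hindep : iIndepFun (fun j (ω : ι → M) ↦ A.indicator (1 : M → ℝ) (ω j) - (μ[|P j]).real A)
      (jitteredSampling μ P) :=
    iIndepFun_pi (X := fun j x ↦ A.indicator (1 : M → ℝ) x - (μ[|P j]).real A)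
      fun j ↦ ((measurable_one.indicator hA).sub_const _).aemeasurable
  have hsum := HasSubgaussianMGF.sum_of_iIndepFun hindep (s := Finset.univ)
    fun j _ ↦ hP.hasSubgaussianMGF_indicator_eval hA j
  have hparam : ∑ j, (cutParts P A : Set ι).indicator (fun _ ↦ (1 / 4 : ℝ≥0)) j =
      (cutParts P A).card / 4 := by
    classical
    simp [Set.indicator_apply, Finset.sum_ite_mem, div_eq_mul_inv]
  simpa only [hP.discrepancy_eq_sum hA, hparam] using hsum

lemma exists_forall_abs_discrepancy_le [IsFiniteMeasure μ] (hP : IsEquipartition μ P)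
    {G : Type*} [Fintype G] {A : G → Set M} (hA : ∀ g, MeasurableSet (A g)) {K t : ℝ}
    (hK : 0 ≤ K) (hcut : ∀ g, (cutParts P (A g)).card ≤ K) (ht : 0 ≤ t)
    (hlt : Fintype.card G * (2 * Real.exp (-(2 * t ^ 2 / K))) < 1) :
    ∃ D : ι → M, ∀ g, |discrepancy μ D (A g)| ≤ t := by
  have := hP.isProbabilityMeasure_jitteredSampling
  lift K to ℝ≥0 using hK
  refine exists_forall_abs_le_of_hasSubgaussianMGF (c := K / 4) (fun g ↦
    hasSubgaussianMGF_mono (hP.hasSubgaussianMGF_discrepancy (hA g)) ?_) ht ?_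
  · gcongr
    exact_mod_cast hcut g
  · convert hlt using 4
    push_cast
    field_simp
    norm_num

end IsEquipartition

end JitteredSampling

section Balls

variable {M ι : Type*} [PseudoMetricSpace M] [BoundedSpace M] [Fintype ι] {P : ι → Set M} {δ : ℝ}

lemma biUnion_cutParts_ball_subset (hmesh : ∀ j, diam (P j) ≤ δ) (y : M) (r : ℝ) :
    ⋃ j ∈ cutParts P (ball y r), P j ⊆ ball y (r + δ) \ ball y (r - δ) := by
  intro x hx
  obtain ⟨j, hj, hxP⟩ := mem_iUnion₂.mp hx
  simp only [cutParts, Finset.mem_filter_univ] at hj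
  obtain ⟨⟨a, haP, ha⟩, hnot_subset⟩ := hj
  obtain ⟨b, hbP, hb⟩ := not_subset.mp hnot_subset
  have hxa : dist x a ≤ δ := (dist_le_diam_of_mem (.all _) hxP haP).trans (hmesh j)
  have hbx : dist b x ≤ δ := (dist_le_diam_of_mem (.all _) hbP hxP).trans (hmesh j)
  rw [mem_ball] at ha hb
  rw [Set.mem_sdiff, mem_ball, mem_ball]
  constructor
  · linarith [dist_triangle x a y]
  · linarith [dist_triangle b x y]

variable [MeasurableSpace M] {μ : Measure M}

namespace IsEquipartition

lemma exists_net (hP : IsEquipartition μ P) (hmesh : ∀ j, diam (P j) ≤ δ) :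
    ∃ z : ι → M, ∀ y, ∃ j, dist y (z j) ≤ δ := by
  choose z hz using fun j ↦ nonempty_of_measure_ne_zero (hP.measure_ne_zero j)
  refine ⟨z, fun y ↦ ?_⟩
  obtain ⟨j, hj⟩ := mem_iUnion.mp (hP.iUnion_eq_univ ▸ mem_univ y)
  exact ⟨j, (dist_le_diam_of_mem (.all _) hj (hz j)).trans (hmesh j)⟩

variable [IsProbabilityMeasure μ] {L : ℝ}

lemma one_le_card_mul_of_lipschitz_ball (hP : IsEquipartition μ P) (hδ : 0 < δ)
    (hmesh : ∀ j, diam (P j) ≤ δ)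
    (hL : ∀ y r s, |μ.real (ball y r) - μ.real (ball y s)| ≤ L * |r - s|) :
    1 ≤ Fintype.card ι * (L * (2 * δ)) := by
  obtain ⟨j⟩ := hP.nonempty_index
  obtain ⟨x, hx⟩ := nonempty_of_measure_ne_zero (hP.measure_ne_zero j)
  have hsubset : ⋃ i ∈ ({j} : Finset ι), P i ⊆ ball x (2 * δ) := by
    rw [Finset.set_biUnion_singleton]
    intro w hw
    rw [mem_ball]
    linarith [dist_le_diam_of_mem (.all _) hw hx, hmesh j]
  have hball : μ.real (ball x (2 * δ)) ≤ L * (2 * δ) := by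
    simpa [abs_of_pos hδ, abs_of_nonneg measureReal_nonneg] using hL x (2 * δ) 0
  calc (1 : ℝ) ≤ Fintype.card ι * μ.real (ball x (2 * δ)) := by
        simpa using hP.card_le_card_mul_measureReal hsubset
    _ ≤ Fintype.card ι * (L * (2 * δ)) := by gcongr

variable [OpensMeasurableSpace M]

lemma card_cutParts_ball_le (hP : IsEquipartition μ P) (hδ : 0 ≤ δ)
    (hmesh : ∀ j, diam (P j) ≤ δ)
    (hL : ∀ y r s, |μ.real (ball y r) - μ.real (ball y s)| ≤ L * |r - s|) (y : M) (r : ℝ) :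
    (cutParts P (ball y r)).card ≤ Fintype.card ι * (L * (2 * δ)) := by
  have hshell : μ.real (ball y (r + δ) \ ball y (r - δ)) ≤ L * (2 * δ) := by
    rw [measureReal_sdiff (ball_subset_ball (by linarith)) measurableSet_ball]
    calc μ.real (ball y (r + δ)) - μ.real (ball y (r - δ))
        ≤ L * |r + δ - (r - δ)| := (le_abs_self _).trans (hL y _ _)
      _ = L * (2 * δ) := by
        rw [abs_of_nonneg (by linarith)]
        ring
  calc ((cutParts P (ball y r)).card : ℝ)
      ≤ Fintype.card ι * μ.real (ball y (r + δ) \ ball y (r - δ)) :=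
        hP.card_le_card_mul_measureReal (biUnion_cutParts_ball_subset hmesh y r)
    _ ≤ Fintype.card ι * (L * (2 * δ)) := by gcongr

lemma exists_forall_abs_discrepancy_finite_balls_le (hP : IsEquipartition μ P) (hδ : 0 ≤ δ)
    (hL₀ : 0 ≤ L) (hmesh : ∀ j, diam (P j) ≤ δ)
    (hL : ∀ y r s, |μ.real (ball y r) - μ.real (ball y s)| ≤ L * |r - s|)
    {G : Type*} [Fintype G] (z : G → M) (ρ : G → ℝ) {t : ℝ} (ht : 0 ≤ t)
    (hlt : 2 * Fintype.card G * Real.exp (-(t ^ 2 / (Fintype.card ι * L * δ))) < 1) :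
    ∃ D : ι → M, ∀ g, |discrepancy μ D (ball (z g) (ρ g))| ≤ t := by
  refine hP.exists_forall_abs_discrepancy_le (K := Fintype.card ι * (L * (2 * δ)))
    (fun _ ↦ measurableSet_ball) (by positivity)
    (fun g ↦ hP.card_cutParts_ball_le hδ hmesh hL (z g) (ρ g)) ht ?_
  have hexponent : 2 * t ^ 2 / (Fintype.card ι * (L * (2 * δ))) =
      t ^ 2 / (Fintype.card ι * L * δ) := by
    rw [← mul_div_mul_left _ _ two_ne_zero]
    ring_nf
  rw [hexponent]
  linarith

lemma exists_forall_abs_discrepancy_ball_le (hP : IsEquipartition μ P) (hδ : 0 ≤ δ)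
    (hL₀ : 0 ≤ L) (hmesh : ∀ j, diam (P j) ≤ δ)
    (hL : ∀ y r s, |μ.real (ball y r) - μ.real (ball y s)| ≤ L * |r - s|)
    {κ : Type*} [Fintype κ] {z : κ → M} {ε : ℝ} (hz : ∀ y, ∃ k, dist y (z k) ≤ ε)
    {n : ℕ} (hn : n ≠ 0) {t : ℝ} (ht : 0 ≤ t)
    (hlt : 4 * (n + 1) * Fintype.card κ * Real.exp (-(t ^ 2 / (Fintype.card ι * L * δ))) < 1) :
    ∃ D : ι → M, ∀ y, ∀ r ∈ Icc (0 : ℝ) 1,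
      |discrepancy μ D (ball y r)| ≤ t + Fintype.card ι * (L * (2 * ε + 1 / n)) := by
  obtain ⟨D, hD⟩ := hP.exists_forall_abs_discrepancy_finite_balls_le hδ hL₀ hmesh hL
    (G := κ × (Fin (n + 1) ⊕ Fin (n + 1))) (fun g ↦ z g.1)
    (fun g ↦ g.2.elim (fun m : Fin (n + 1) ↦ (m : ℝ) / n - ε)
      (fun m : Fin (n + 1) ↦ ((m : ℝ) + 1) / n + ε)) ht (by
      simp only [Fintype.card_prod, Fintype.card_sum, Fintype.card_fin]
      push_cast
      linarith)
  refine ⟨D, fun y r hr ↦ ?_⟩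
  obtain ⟨k, hk⟩ := hz y
  obtain ⟨m, hmr, hrm⟩ := exists_fin_div_le_and_le_div hn hr
  have hinner : ball (z k) (m / n - ε) ⊆ ball y r :=
    ball_subset_ball' (by linarith [dist_comm y (z k)])
  have houter : ball y r ⊆ ball (z k) ((m + 1) / n + ε) := ball_subset_ball' (by linarith)
  have hshell : μ.real (ball (z k) ((m + 1) / n + ε)) - μ.real (ball (z k) (m / n - ε)) ≤
      L * (2 * ε + 1 / n) := by
    have hε : 0 ≤ ε := dist_nonneg.trans hk
    have hwidth : ((m : ℝ) + 1) / n + ε - (m / n - ε) = 2 * ε + 1 / n := by ring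
    calc μ.real (ball (z k) ((m + 1) / n + ε)) - μ.real (ball (z k) (m / n - ε))
        ≤ L * |(m + 1) / n + ε - (m / n - ε)| := (le_abs_self _).trans (hL _ _ _)
      _ = L * (2 * ε + 1 / n) := by rw [hwidth, abs_of_nonneg (by positivity)]
  exact abs_discrepancy_le_of_subset_of_subset hinner houter (hD (k, .inl m)) (hD (k, .inr m))
    hshell

lemma exists_forall_abs_discrepancy_ball_le_sqrt_log (hP : IsEquipartition μ P) (hδ : 0 < δ)
    (hL₀ : 0 < L) (hmesh : ∀ j, diam (P j) ≤ δ)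
    (hL : ∀ y r s, |μ.real (ball y r) - μ.real (ball y s)| ≤ L * |r - s|)
    (hι : 2 ≤ Fintype.card ι) {κ : Type*} [Fintype κ] {q : ℕ}
    (hκ : Fintype.card κ ≤ Fintype.card ι ^ q) {z : κ → M} {ε : ℝ}
    (hz : ∀ y, ∃ k, dist y (z k) ≤ ε) :
    ∃ D : ι → M, ∀ y, ∀ r ∈ Icc (0 : ℝ) 1,
      |discrepancy μ D (ball y r)| ≤
        √((q + 4) * (Fintype.card ι * L * δ) * Real.log (Fintype.card ι)) +
          L * (2 * Fintype.card ι * ε + 1) := by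
  set N := Fintype.card ι
  have hexponent : √((q + 4) * (N * L * δ) * Real.log N) ^ 2 / (N * L * δ) =
      (q + 4) * Real.log N := by
    rw [Real.sq_sqrt (by positivity)]
    field_simp
  obtain ⟨D, hD⟩ := hP.exists_forall_abs_discrepancy_ball_le hδ.le hL₀.le hmesh hL hz
    (n := N) (by positivity) (Real.sqrt_nonneg ((q + 4) * (N * L * δ) * Real.log N)) (by
      rw [hexponent]
      calc 4 * ((N : ℝ) + 1) * Fintype.card κ * Real.exp (-((q + 4) * Real.log N))
          ≤ 4 * (N + 1) * N ^ q * Real.exp (-((q + 4) * Real.log N)) := by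
            gcongr
            exact_mod_cast hκ
        _ < 1 := four_mul_succ_mul_pow_mul_exp_lt_one hι q)
  have hcancel : N * (L * (2 * ε + 1 / N)) = L * (2 * N * ε + 1) := by field_simp
  exact ⟨D, fun y r hr ↦ (hD y r hr).trans_eq (congrArg _ hcancel)⟩

end IsEquipartition

end Balls

section Asymptotics

/-- The order of magnitude `N ^ (1/2 - 1/(2d)) (log N) ^ (1/2)` of the discrepancy of `N` points
in dimension `d`. -/
noncomputable def discrepancyRate (d : ℝ) (N : ℕ) : ℝ :=
  (N : ℝ) ^ (1 / 2 - 1 / (2 * d)) * Real.log N ^ ((1 : ℝ) / 2)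

lemma sqrt_mul_rpow_mul_log {a d : ℝ} (ha : 0 ≤ a) {N : ℕ} (hN : N ≠ 0) :
    √(a * (N * (N : ℝ) ^ (-1 / d)) * Real.log N) = √a * discrepancyRate d N := by
  have hN₀ : (0 : ℝ) < N := by positivity
  have hpow : N * (N : ℝ) ^ (-1 / d) = (N : ℝ) ^ (1 + -1 / d) := by
    rw [Real.rpow_add hN₀, Real.rpow_one]
  rw [mul_assoc, Real.sqrt_mul ha, hpow, Real.sqrt_mul (by positivity), Real.sqrt_eq_rpow (_ ^ _),
    ← Real.rpow_mul hN₀.le, Real.sqrt_eq_rpow (Real.log N), discrepancyRate]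
  congr 3
  ring

lemma sqrt_log_two_le_discrepancyRate {d : ℝ} (hd : 1 ≤ d) {N : ℕ} (hN : 2 ≤ N) :
    √(Real.log 2) ≤ discrepancyRate d N := by
  have hN₂ : (2 : ℝ) ≤ N := by exact_mod_cast hN
  have hexponent : 0 ≤ 1 / 2 - 1 / (2 * d) := by
    rw [sub_nonneg]
    exact one_div_le_one_div_of_le two_pos (by linarith)
  have hpow : 1 ≤ (N : ℝ) ^ (1 / 2 - 1 / (2 * d)) := Real.one_le_rpow (by linarith) hexponent
  calc √(Real.log 2) ≤ √(Real.log N) := by gcongr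
    _ ≤ (N : ℝ) ^ (1 / 2 - 1 / (2 * d)) * √(Real.log N) :=
      le_mul_of_one_le_left (Real.sqrt_nonneg _) hpow
    _ = discrepancyRate d N := by rw [Real.sqrt_eq_rpow, discrepancyRate]

lemma le_div_sqrt_log_two_mul_discrepancyRate {b d : ℝ} (hb : 0 ≤ b) (hd : 1 ≤ d) {N : ℕ}
    (hN : 2 ≤ N) : b ≤ b / √(Real.log 2) * discrepancyRate d N := by
  have hlog : 0 < √(Real.log 2) := Real.sqrt_pos.mpr (Real.log_pos one_lt_two)
  rw [div_mul_eq_mul_div, le_div_iff₀ hlog]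
  exact mul_le_mul_of_nonneg_left (sqrt_log_two_le_discrepancyRate hd hN) hb

lemma exponent_nonneg_of_eventually_le_mul_rpow {a b : ℝ}
    (h : ∀ᶠ m : ℕ in atTop, 1 ≤ b * (m : ℝ) ^ a) : 0 ≤ a := by
  by_contra! ha
  have hlim : Tendsto (fun m : ℕ ↦ b * (m : ℝ) ^ a) atTop (𝓝 0) := by
    simpa using ((tendsto_rpow_neg_atTop (neg_pos.mpr ha)).comp
      tendsto_natCast_atTop_atTop).const_mul b
  exact (ge_of_tendsto hlim h).not_gt one_pos

variable {M : Type*} [PseudoMetricSpace M] [BoundedSpace M] [MeasurableSpace M]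
  {μ : Measure M} [IsProbabilityMeasure μ] {L c d : ℝ} {m₀ : ℕ}

lemma one_le_dimension_of_isEquipartition (hd : 0 < d) (hc : 0 < c)
    (hL : ∀ y r s, |μ.real (ball y r) - μ.real (ball y s)| ≤ L * |r - s|)
    (hpart : ∀ m ≥ m₀, ∃ P : Fin m → Set M, IsEquipartition μ P ∧
      ∀ j, diam (P j) ≤ c * (m : ℝ) ^ (-1 / d)) :
    1 ≤ d := by
  have hexponent : 0 ≤ 1 + -1 / d := by
    refine exponent_nonneg_of_eventually_le_mul_rpow (b := 2 * L * c) ?_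
    filter_upwards [eventually_ge_atTop m₀, eventually_gt_atTop 0] with m hm hm₀
    obtain ⟨P, hP, hmesh⟩ := hpart m hm
    have hm_pos : (0 : ℝ) < m := by exact_mod_cast hm₀
    have hle := hP.one_le_card_mul_of_lipschitz_ball (by positivity) hmesh hL
    rw [Fintype.card_fin] at hle
    rw [Real.rpow_add hm_pos, Real.rpow_one]
    linarith
  have hinv : 1 / d ≤ 1 := by linarith [neg_div d 1]
  rwa [div_le_one hd] at hinv

lemma rpow_neg_one_div_natCast_pow_le_inv {N q : ℕ} (hN : 1 ≤ N) (hd : 0 < d) (hq : d ≤ q) :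
    ((N ^ q : ℕ) : ℝ) ^ (-1 / d) ≤ (N : ℝ)⁻¹ := by
  have hN₁ : (1 : ℝ) ≤ N := by exact_mod_cast hN
  rw [Nat.cast_pow, ← Real.rpow_natCast, ← Real.rpow_mul (by positivity), ← Real.rpow_neg_one]
  refine Real.rpow_le_rpow_of_exponent_le hN₁ ?_
  rw [mul_div_assoc', div_le_iff₀ hd]
  linarith

lemma exists_forall_abs_discrepancy_ball_le_discrepancyRate [OpensMeasurableSpace M] (hd : 0 < d)
    (hc : 0 < c) (hL₀ : 0 < L)
    (hL : ∀ y r s, |μ.real (ball y r) - μ.real (ball y s)| ≤ L * |r - s|) {q : ℕ} (hq : d ≤ q)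
    (hpart : ∀ m ≥ m₀, ∃ P : Fin m → Set M, IsEquipartition μ P ∧
      ∀ j, diam (P j) ≤ c * (m : ℝ) ^ (-1 / d))
    {N : ℕ} (hN : 2 ≤ N) (hm₀ : m₀ ≤ N) :
    ∃ D : Fin N → M, ∀ y, ∀ r ∈ Icc (0 : ℝ) 1, |discrepancy μ D (ball y r)| ≤
      √((q + 4) * L * c) * discrepancyRate d N + L * (2 * c + 1) := by
  have hq₀ : q ≠ 0 := by
    rintro rfl
    exact hq.not_gt (by simpa using hd)
  obtain ⟨P, hP, hPmesh⟩ := hpart N hm₀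
  obtain ⟨Q, hQ, hQmesh⟩ := hpart (N ^ q) (hm₀.trans (Nat.le_self_pow hq₀ N))
  obtain ⟨z, hz⟩ := hQ.exists_net (δ := c * (N : ℝ)⁻¹) fun j ↦ (hQmesh j).trans <|
    mul_le_mul_of_nonneg_left (rpow_neg_one_div_natCast_pow_le_inv (by lia) hd hq) hc.le
  obtain ⟨D, hD⟩ := hP.exists_forall_abs_discrepancy_ball_le_sqrt_log (by positivity) hL₀ hPmesh
    hL (by simpa using hN) (q := q) (by simp) hz
  refine ⟨D, fun y r hr ↦ (hD y r hr).trans_eq ?_⟩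
  rw [← sqrt_mul_rpow_mul_log (by positivity) (by positivity), Fintype.card_fin]
  congr 2
  · ring
  · field_simp

lemma exists_forall_abs_discrepancy_ball_le_add [OpensMeasurableSpace M] (hd : 0 < d)
    (hc : 0 < c) (hL₀ : 0 < L)
    (hL : ∀ y r s, |μ.real (ball y r) - μ.real (ball y s)| ≤ L * |r - s|) {q : ℕ} (hq : d ≤ q)
    (hpart : ∀ m ≥ m₀, ∃ P : Fin m → Set M, IsEquipartition μ P ∧
      ∀ j, diam (P j) ≤ c * (m : ℝ) ^ (-1 / d)) {N : ℕ} (hN : 2 ≤ N) :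
    ∃ D : Fin N → M, ∀ y, ∀ r ∈ Icc (0 : ℝ) 1, |discrepancy μ D (ball y r)| ≤
      √((q + 4) * L * c) * discrepancyRate d N + (L * (2 * c + 1) + m₀) := by
  rcases le_or_gt m₀ N with hm₀ | hm₀
  · obtain ⟨D, hD⟩ :=
      exists_forall_abs_discrepancy_ball_le_discrepancyRate hd hc hL₀ hL hq hpart hN hm₀
    exact ⟨D, fun y r hr ↦ by linarith [hD y r hr, (Nat.cast_nonneg m₀ : (0 : ℝ) ≤ m₀)]⟩
  · obtain ⟨x⟩ := nonempty_of_isProbabilityMeasure μ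
    refine ⟨fun _ ↦ x, fun y r _ ↦ (abs_discrepancy_le_card μ _ _).trans ?_⟩
    have hNm₀ : (N : ℝ) ≤ m₀ := by exact_mod_cast hm₀.le
    have hmain : 0 ≤ √((q + 4) * L * c) * discrepancyRate d N := by
      unfold discrepancyRate
      positivity
    have hsecond : 0 ≤ L * (2 * c + 1) := by positivity
    rw [Fintype.card_fin]
    linarith

end Asymptotics

-- Continuity at radius `1` forces every ball of radius at least `1` to have full measure, as the
-- convention built into `vol` requires.
lemma vol_eq_measureReal_ball {M : Type*} [MetricSpace M] [MeasurableSpace M] {μ : Measure M}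
    [IsProbabilityMeasure μ] {y : M} (h : Continuous (vol μ y)) (r : ℝ) :
    vol μ y r = μ.real (ball y r) := by
  rcases lt_or_ge r 1 with hr | hr
  · rw [vol, if_neg hr.not_ge, measureReal_def]
  · have hvol (s : ℝ) (hs : 1 ≤ s) : vol μ y s = 1 := if_pos hs
    have hle : ∀ᶠ s in 𝓝[<] (1 : ℝ), vol μ y s ≤ μ.real (ball y r) := by
      filter_upwards [self_mem_nhdsWithin] with s hs
      rw [vol, if_neg (not_le.mpr hs)]
      exact measureReal_mono (ball_subset_ball (hs.le.trans hr))
    refine le_antisymm ?_ (measureReal_le_one.trans_eq (hvol r hr).symm)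
    rw [hvol r hr, ← hvol 1 le_rfl]
    exact le_of_tendsto (h.tendsto 1 |>.mono_left nhdsWithin_le_nhds) hle

theorem stmt11_general {M : Type*} [PseudoMetricSpace M] [BoundedSpace M]
    [MeasurableSpace M] [OpensMeasurableSpace M] (μ : Measure M) [IsProbabilityMeasure μ]
    (d c₂ c₈ : ℝ) (hd : 0 < d) (hc₂ : 0 < c₂) (hc₈ : 0 < c₈)
    (hB : ∀ y : M, ∀ r₁ r₂ : ℝ, |μ.real (ball y r₁) - μ.real (ball y r₂)| ≤ c₂ * |r₁ - r₂|)
    (hpart : ∃ m₀ : ℕ, ∀ m : ℕ, m₀ ≤ m → ∃ P : Fin m → Set M,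
      (∀ j, MeasurableSet (P j)) ∧ Pairwise (Function.onFun Disjoint P) ∧
      (⋃ j, P j) = univ ∧ (∀ j, μ (P j) = 1 / m) ∧
      (∀ j, diam (P j) ≤ c₈ * (m : ℝ) ^ (-(1 : ℝ) / d))) :
    ∃ c₆ : ℝ, 0 < c₆ ∧ ∀ N : ℕ, 2 ≤ N → ∃ D : Fin N → M,
      ∀ y : M, ∀ r ∈ Icc (0 : ℝ) 1,
        |(∑ i : Fin N, (ball y r).indicator 1 (D i) : ℝ) - N * μ.real (ball y r)|
          ≤ c₆ * (N : ℝ) ^ (1 / 2 - 1 / (2 * d)) * Real.log N ^ ((1 : ℝ) / 2) := by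
  obtain ⟨m₀, hpart⟩ := hpart
  have hequi : ∀ m ≥ m₀, ∃ P : Fin m → Set M, IsEquipartition μ P ∧
      ∀ j, diam (P j) ≤ c₈ * (m : ℝ) ^ (-1 / d) := fun m hm ↦ by
    obtain ⟨P, hmeas, hdisj, hunion, hmass, hmesh⟩ := hpart m hm
    exact ⟨P, ⟨hmeas, hdisj, hunion, by simpa using hmass⟩, hmesh⟩
  have hd₁ : 1 ≤ d := one_le_dimension_of_isEquipartition hd hc₈ hB hequi
  set a : ℝ := √((⌈d⌉₊ + 4) * c₂ * c₈)
  set b : ℝ := c₂ * (2 * c₈ + 1) + m₀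
  refine ⟨a + b / √(Real.log 2), by positivity, fun N hN ↦ ?_⟩
  obtain ⟨D, hD⟩ :=
    exists_forall_abs_discrepancy_ball_le_add hd hc₈ hc₂ hB (Nat.le_ceil d) hequi hN
  refine ⟨D, fun y r hr ↦ ?_⟩
  have hb := le_div_sqrt_log_two_mul_discrepancyRate (b := b) (by positivity) hd₁ hN
  calc |(∑ i, (ball y r).indicator 1 (D i) : ℝ) - N * μ.real (ball y r)|
      = |discrepancy μ D (ball y r)| := by rw [discrepancy, Fintype.card_fin]
    _ ≤ a * discrepancyRate d N + b := hD y r hr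
    _ ≤ (a + b / √(Real.log 2)) * discrepancyRate d N := by linarith
    _ = _ := by rw [discrepancyRate, mul_assoc]

/-- Corollary 1.1: under the assumptions of Theorem 1.1, there exists
`c₆ > 0` such that for all `N ≥ 2` there is an `N`-point set `D_N` with
`L_∞[D_N] ≤ c₆ N^{1/2 - 1/(2d)} (log N)^{1/2}`. -/
theorem stmt11 {M : Type*} [MetricSpace M] [CompactSpace M] [ConnectedSpace M] [Nonempty M]
    [MeasurableSpace M] [BorelSpace M] (μ : Measure M) [IsProbabilityMeasure μ]
    (hdiam : Metric.diam (Set.univ : Set M) = 1)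
    (d c₁ c₂ c₈ : ℝ) (hd : 0 < d) (hc₁ : 0 < c₁) (hc₂ : 0 < c₂) (hc₈ : 0 < c₈)
    (hA : ∀ y : M, ∀ r ∈ Set.Icc (0:ℝ) 1,
      c₁⁻¹ * r ^ d ≤ vol μ y r ∧ vol μ y r ≤ c₁ * r ^ d)
    (hB : ∀ y : M, ∀ r₁ r₂ : ℝ, |vol μ y r₁ - vol μ y r₂| ≤ c₂ * |r₁ - r₂|)
    (hpart : ∃ m₀ : ℕ, ∀ m : ℕ, m₀ ≤ m → ∃ P : Fin m → Set M,
      (∀ j, MeasurableSet (P j)) ∧ Pairwise (Function.onFun Disjoint P) ∧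
      (⋃ j, P j) = Set.univ ∧ (∀ j, μ (P j) = 1 / m) ∧
      (∀ j, Metric.diam (P j) ≤ c₈ * (m : ℝ) ^ (-(1:ℝ)/d))) :
    ∃ c₆ : ℝ, 0 < c₆ ∧ ∀ N : ℕ, 2 ≤ N → ∃ D : Fin N → M,
      ∀ y : M, ∀ r ∈ Set.Icc (0:ℝ) 1,
        |(∑ i : Fin N, (Metric.ball y r).indicator 1 (D i) : ℝ) - N * vol μ y r|
          ≤ c₆ * (N : ℝ) ^ (1/2 - 1/(2*d)) * (Real.log N) ^ ((1:ℝ)/2) := by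
  have hvol (y : M) := vol_eq_measureReal_ball (LipschitzWith.of_dist_le' (hB y)).continuous
  simp only [hvol] at hB ⊢
  exact stmt11_general μ d c₂ c₈ hd hc₂ hc₈ hB hpart
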